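/- Let (X, ρ) be a metric space and let γ : [a,b] → X be a continuous mapping. Then γ is absolutely continuous if and only if for every Lipschitz function h : X → ℝ the composition h ∘ γ : [a,b] → ℝ is absolutely continuous. -/

import Mathlib

/-- A mapping `γ` of the segment `[a,b]` into a metric space is absolutely continuous
if for every `ε > 0` there is `δ > 0` such that for every finite collection of pairwise
disjoint intervals `(cᵢ, dᵢ) ⊆ [a,b]` with `∑ (dᵢ - cᵢ) < δ` one has
`∑ dist (γ cᵢ) (γ dᵢ) < ε`. -/
def AbsContOn {X : Type*} [MetricSpace X] (γ : ℝ → X) (a b : ℝ) : Prop :=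
  ∀ ε > (0 : ℝ), ∃ δ > (0 : ℝ), ∀ (n : ℕ) (c d : Fin n → ℝ),
    (∀ i, a ≤ c i ∧ c i < d i ∧ d i ≤ b) →
    (Pairwise fun i j => Disjoint (Set.Ioo (c i) (d i)) (Set.Ioo (c j) (d j))) →
    ∑ i, (d i - c i) < δ →
    ∑ i, dist (γ (c i)) (γ (d i)) < ε

section Helpers
open Set MeasureTheory Filter Topology

theorem absContOn_iff {X : Type*} [MetricSpace X] {γ : ℝ → X} {a b : ℝ} (hab : a ≤ b) :
    AbsContOn γ a b ↔ AbsolutelyContinuousOnInterval γ a b := by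
  rw [absolutelyContinuousOnInterval_iff]
  constructor
  · intro h ε hε
    obtain ⟨δ, hδ, H⟩ := h ε hε
    refine ⟨δ, hδ, ?_⟩
    rintro ⟨n, I⟩ ⟨h1, h2⟩ h3
    simp only [uIcc_of_le hab] at h1 h2 h3 ⊢
    set S := (Finset.range n).filter (fun i => (I i).1 ≠ (I i).2) with hS
    let e := S.equivFin
    have key : ∀ F : ℝ × ℝ → ℝ, (∀ x, F (x, x) = 0) →
        ∑ i ∈ Finset.range n, F (I i) = ∑ k : Fin S.card, F (I (e.symm k)) := by
      intro F hF
      rw [Equiv.sum_comp e.symm (fun i : S => F (I i)), Finset.sum_coe_sort S (fun i => F (I i)), hS,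
        Finset.sum_filter_of_ne]
      intro i _ hi hne
      apply hi
      have := hF (I i).1
      rwa [show ((I i).1, (I i).1) = I i from Prod.ext rfl hne] at this
    have hm : ∀ k, (e.symm k : ℕ) ∈ Finset.range n ∧ (I (e.symm k)).1 ≠ (I (e.symm k)).2 :=
      fun k => Finset.mem_filter.1 (e.symm k).2
    have := H S.card (fun k => min (I (e.symm k)).1 (I (e.symm k)).2)
      (fun k => max (I (e.symm k)).1 (I (e.symm k)).2) ?_ ?_ ?_
    · rw [key (fun p => dist (γ p.1) (γ p.2)) (by simp)]
      refine lt_of_eq_of_lt (Finset.sum_congr rfl fun k _ => ?_) this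
      rcases le_total (I (e.symm k)).1 (I (e.symm k)).2 with h | h
      · simp [h]
      · simp [h, dist_comm]
    · intro k
      obtain ⟨h4, h5⟩ := hm k
      obtain ⟨h6, h7⟩ := h1 _ h4
      exact ⟨le_min h6.1 h7.1, min_lt_max.2 h5, max_le h6.2 h7.2⟩
    · intro k l hkl
      have h4 : (e.symm k : ℕ) ≠ e.symm l := fun h => hkl (e.symm.injective (Subtype.ext h))
      have := h2 (Finset.mem_coe.2 (hm k).1) (Finset.mem_coe.2 (hm l).1) h4
      exact this.mono Ioo_subset_Ioc_self Ioo_subset_Ioc_self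
    · rw [key (fun p => dist p.1 p.2) (by simp)] at h3
      refine lt_of_eq_of_lt (Finset.sum_congr rfl fun k _ => ?_) h3
      rw [max_sub_min_eq_abs', Real.dist_eq]
  · intro h ε hε
    obtain ⟨δ, hδ, H⟩ := h ε hε
    refine ⟨δ, hδ, fun n c d h1 h2 h3 => ?_⟩
    have := H (n, fun i => if h : i < n then (c ⟨i, h⟩, d ⟨i, h⟩) else (0, 0)) ?_ ?_
    · simpa [Finset.sum_range] using this
    · refine ⟨?_, ?_⟩
      · intro i hi
        have hi := Finset.mem_range.1 hi
        simp only [hi, dif_pos, uIcc_of_le hab]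
        obtain ⟨h4, h5, h6⟩ := h1 ⟨i, hi⟩
        exact ⟨⟨h4, by linarith⟩, ⟨by linarith, h6⟩⟩
      · intro i hi j hj hij
        have hi : i < n := by simpa using hi
        have hj : j < n := by simpa using hj
        have h7 := h2 (i := ⟨i, hi⟩) (j := ⟨j, hj⟩) (by simpa using hij)
        obtain ⟨h4, h5, h6⟩ := h1 ⟨i, hi⟩
        obtain ⟨h4', h5', h6'⟩ := h1 ⟨j, hj⟩
        simp only [Function.onFun, hi, hj, dif_pos, uIoc_of_le h5.le, uIoc_of_le h5'.le]
        beta_reduce at h7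
        rw [Ioo_disjoint_Ioo] at h7
        rw [Ioc_disjoint_Ioc]
        exact h7
    · have : ∀ i : Fin n, dist (c i) (d i) = d i - c i := fun i => by
        rw [dist_comm, Real.dist_eq, abs_of_pos]; linarith [(h1 i).2.1]
      simpa [Finset.sum_range, this] using h3


theorem ac_of_bv {X : Type*} [MetricSpace X] {γ : ℝ → X} {a b : ℝ} (hab : a ≤ b)
    (hbv : BoundedVariationOn γ (Icc a b))
    (hac : ∀ x, AbsolutelyContinuousOnInterval (fun t => dist (γ t) x) a b) :
    AbsolutelyContinuousOnInterval γ a b := by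
  have hl := hbv.locallyBoundedVariationOn
  set V := variationOnFromTo γ (Icc a b) a with hV
  have ha : a ∈ Icc a b := ⟨le_rfl, hab⟩
  have hVm : MonotoneOn V (Icc a b) := variationOnFromTo.monotoneOn hl ha
  have hVd : ∀ x ∈ Icc a b, ∀ y ∈ Icc a b, x ≤ y → dist (γ x) (γ y) ≤ V y - V x := by
    intro x hx y hy hxy
    have h1 := variationOnFromTo.add hl ha hx hy
    have h2 : dist (γ x) (γ y) ≤ variationOnFromTo γ (Icc a b) x y := by
      rw [variationOnFromTo.eq_of_le _ _ hxy]
      exact BoundedVariationOn.dist_le (hl x y hx hy) ⟨hx, le_rfl, hxy⟩ ⟨hy, hxy, le_rfl⟩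
    simp only [hV]; linarith
  have hVae : ∀ᵐ x, x ∈ Icc a b → DifferentiableAt ℝ V x := by
    have : BoundedVariationOn V (uIcc a b) := by
      rw [uIcc_of_le hab]
      intro h
      have := hVm.eVariationOn_eq ha ⟨hab, le_rfl⟩
      rw [inter_self, h] at this
      simp at this
    simpa [uIcc_of_le hab] using this.ae_differentiableAt_of_mem_uIcc
  have hint : IntervalIntegrable (deriv V) volume a b :=
    MonotoneOn.intervalIntegrable_deriv (by rwa [uIcc_of_le hab])
  have key : ∀ s ∈ Icc a b, ∀ t ∈ Icc a b, s ≤ t → dist (γ s) (γ t) ≤ ∫ v in s..t, deriv V v := by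
    intro s hs t ht hst
    have hsub : uIcc s t ⊆ uIcc a b := by
      rw [uIcc_of_le hst, uIcc_of_le hab]; exact Icc_subset_Icc hs.1 ht.2
    have hf := (hac (γ s)).mono hsub
    have h1 := hf.integral_deriv_eq_sub
    simp only [dist_self, sub_zero] at h1
    rw [dist_comm, ← h1]
    apply intervalIntegral.integral_mono_ae_restrict hst hf.intervalIntegrable_deriv
      (hint.mono_set hsub)
    have hd := hf.ae_differentiableAt
    have hne : ∀ᵐ x : ℝ, x ≠ s ∧ x ≠ t := by
      have h1 : ∀ᵐ x : ℝ, x ≠ s := by simp [ae_iff]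
      have h2 : ∀ᵐ x : ℝ, x ≠ t := by simp [ae_iff]
      exact h1.and h2
    filter_upwards [ae_restrict_mem measurableSet_Icc, ae_restrict_of_ae hd, ae_restrict_of_ae hVae,
      ae_restrict_of_ae hne] with x hx h2 h3 h4
    have hx' : x ∈ Icc a b := Icc_subset_Icc hs.1 ht.2 hx
    have h2 := h2 (by rwa [uIcc_of_le hst])
    have h3 := h3 hx'
    have hm : MonotoneOn (V - fun τ => dist (γ τ) (γ s)) (Icc a b) := by
      intro y hy z hz hyz
      have := hVd y hy z hz hyz
      have h5 := dist_triangle (γ z) (γ y) (γ s)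
      rw [dist_comm (γ z) (γ y)] at h5
      simp only [Pi.sub_apply]; linarith
    have hmem : Icc a b ∈ 𝓝 x := by
      apply Icc_mem_nhds
      · exact lt_of_le_of_lt hs.1 (lt_of_le_of_ne hx.1 (Ne.symm h4.1))
      · exact lt_of_lt_of_le (lt_of_le_of_ne hx.2 h4.2) ht.2
    have h6 : 0 ≤ derivWithin (V - fun τ => dist (γ τ) (γ s)) (Icc a b) x := hm.derivWithin_nonneg
    rw [derivWithin_of_mem_nhds hmem, deriv_sub h3 h2] at h6
    linarith
  have hG := hint.absolutelyContinuousOnInterval_intervalIntegral (c := a) (by simp)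
  have hcmp : ∀ s ∈ Icc a b, ∀ t ∈ Icc a b,
      dist (γ s) (γ t) ≤ dist (∫ v in a..s, deriv V v) (∫ v in a..t, deriv V v) := by
    have hi : ∀ s ∈ Icc a b, IntervalIntegrable (deriv V) volume a s := fun s hs =>
      hint.mono_set (by rw [uIcc_of_le hs.1, uIcc_of_le hab]; exact Icc_subset_Icc le_rfl hs.2)
    have aux : ∀ s ∈ Icc a b, ∀ t ∈ Icc a b, s ≤ t →
      dist (γ s) (γ t) ≤ dist (∫ v in a..s, deriv V v) (∫ v in a..t, deriv V v) := by
      intro s hs t ht hst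
      rw [dist_comm (∫ v in a..s, deriv V v), Real.dist_eq,
        intervalIntegral.integral_interval_sub_left (hi t ht) (hi s hs)]
      exact (key s hs t ht hst).trans (le_abs_self _)
    intro s hs t ht
    rcases le_total s t with h | h
    · exact aux s hs t ht h
    · rw [dist_comm, dist_comm (∫ v in a..s, deriv V v)]; exact aux t ht s hs h
  rw [absolutelyContinuousOnInterval_iff] at hG ⊢
  intro ε hε
  obtain ⟨δ, hδ, H⟩ := hG ε hε
  refine ⟨δ, hδ, fun E hE h => lt_of_le_of_lt (Finset.sum_le_sum fun i hi => ?_) (H E hE h)⟩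
  have := hE.1 i hi
  rw [uIcc_of_le hab] at this
  exact hcmp _ this.1 _ this.2


theorem unif_bound {X : Type*} [MetricSpace X] {γ : ℝ → X} {a b : ℝ}
    (H : ∀ h : X → ℝ, (∃ L : ℝ, 0 ≤ L ∧ ∀ x y : X, |h x - h y| ≤ L * dist x y) →
        BoundedVariationOn (h ∘ γ) (Icc a b)) :
    ∃ C : ℝ, ∀ g : X → ℝ, LipschitzWith 1 g → (∀ x, |g x| ≤ 1) →
      eVariationOn (g ∘ γ) (Icc a b) ≤ ENNReal.ofReal C := by
  classical
  let ι := {g : X → ℝ // LipschitzWith 1 g ∧ ∀ x, |g x| ≤ 1}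
  let E := lp (fun _ : ι => ℝ) 1
  have hsum : ∀ c : E, Summable fun g => ‖c g‖ := fun c => by
    have := (lp.memℓp c).summable (by simp)
    simpa using this
  have hnorm : ∀ c : E, ‖c‖ = ∑' g, ‖c g‖ := fun c => by
    rw [lp.norm_eq_tsum_rpow (by simp)]; simp
  have hs : ∀ (c : E) (w : ι → ℝ) (K : ℝ), (∀ g, |w g| ≤ K) → Summable fun g => c g * w g := by
    intro c w K hw
    refine Summable.of_norm_bounded ((hsum c).mul_right K) fun g => ?_
    rw [norm_mul]
    exact mul_le_mul_of_nonneg_left (hw g) (norm_nonneg _)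
  have hb : ∀ (c : E) (w : ι → ℝ) (K : ℝ), (∀ g, |w g| ≤ K) → |∑' g, c g * w g| ≤ K * ‖c‖ := by
    intro c w K hw
    rw [hnorm, ← tsum_mul_left, ← Real.norm_eq_abs]
    refine tsum_of_norm_bounded ((hsum c).mul_left K).hasSum fun g => ?_
    rw [norm_mul, mul_comm]
    exact mul_le_mul_of_nonneg_right (hw g) (norm_nonneg _)
  let ev : X → E →L[ℝ] ℝ := fun x => LinearMap.mkContinuous
    { toFun := fun c => ∑' g : ι, c g * g.1 x
      map_add' := fun c d => by
        rw [← (hs c (fun g => g.1 x) 1 fun g => g.2.2 x).tsum_add (hs d (fun g => g.1 x) 1 fun g => g.2.2 x)]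
        simp [add_mul]
      map_smul' := fun r c => by
        rw [RingHom.id_apply, smul_eq_mul, ← tsum_mul_left]
        exact tsum_congr fun g => mul_assoc _ _ _ } 1 (fun c => hb c (fun g => g.1 x) 1 fun g => g.2.2 x)
  have hev : ∀ x c, ev x c = ∑' g : ι, c g * g.1 x := fun x c => rfl
  have hLip : ∀ c : E, ∀ x y, |ev x c - ev y c| ≤ ‖c‖ * dist x y := by
    intro c x y
    rw [hev, hev, ← (hs c (fun g => g.1 x) 1 fun g => g.2.2 x).tsum_sub
      (hs c (fun g => g.1 y) 1 fun g => g.2.2 y), mul_comm]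
    simp only [← mul_sub]
    apply hb c (fun g => g.1 x - g.1 y)
    intro g
    simpa [Real.dist_eq] using g.2.1.dist_le_mul x y
  let J := {p : ℕ × (ℕ → ℝ) × (ℕ → ℝ) // Monotone p.2.1 ∧ (∀ i, p.2.1 i ∈ Icc a b) ∧ ∀ i, |p.2.2 i| ≤ 1}
  let T : J → E →L[ℝ] ℝ := fun p => ∑ i ∈ Finset.range p.1.1,
    p.1.2.2 i • (ev (γ (p.1.2.1 (i+1))) - ev (γ (p.1.2.1 i)))
  have hT : ∀ p c, T p c = ∑ i ∈ Finset.range p.1.1,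
    p.1.2.2 i * (ev (γ (p.1.2.1 (i+1))) c - ev (γ (p.1.2.1 i)) c) := by
    intro p c
    simp [T]
  obtain ⟨C, hC⟩ := banach_steinhaus (g := T) (by
    intro c
    have hbv := H (fun x => ev x c) ⟨‖c‖, norm_nonneg _, hLip c⟩
    refine ⟨(eVariationOn ((fun x => ev x c) ∘ γ) (Icc a b)).toReal, ?_⟩
    rintro ⟨⟨n, u, σ⟩, hu, hm, hσ⟩
    rw [hT]
    have h1 := eVariationOn.sum_le (f := (fun x => ev x c) ∘ γ) (n := n) hu hm
    have h2 := ENNReal.toReal_mono hbv h1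
    rw [ENNReal.toReal_sum (fun _ _ => edist_ne_top _ _)] at h2
    refine (norm_sum_le _ _).trans (le_trans (Finset.sum_le_sum fun i _ => ?_) h2)
    rw [edist_dist, ENNReal.toReal_ofReal dist_nonneg, Real.dist_eq, norm_mul]
    exact mul_le_of_le_one_left (norm_nonneg _) (hσ i))
  refine ⟨C, fun g hg hg1 => ?_⟩
  let e : E := lp.single 1 (⟨g, hg, hg1⟩ : ι) (1 : ℝ)
  have he : ‖e‖ = 1 := by
    simp only [e]; rw [lp.norm_single (by simp)]; simp
  have heg : ∀ x, ev x e = g x := by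
    intro x
    rw [hev, tsum_eq_single (⟨g, hg, hg1⟩ : ι)]
    · simp [e]
    · intro g' hne
      simp only [e, lp.coeFn_single, mul_eq_zero]
      left
      exact Pi.single_eq_of_ne hne _
  refine iSup_le ?_
  rintro ⟨n, u, hu, hm⟩
  have h1 := (T ⟨(n, u, fun i => SignType.sign (g (γ (u (i+1))) - g (γ (u i)))), hu, hm, fun i => by
    rcases lt_trichotomy (g (γ (u (i+1))) - g (γ (u i))) 0 with h | h | h <;> simp [h, sign_neg, sign_pos]⟩).le_of_opNorm_le (hC _) e
  rw [hT, he, mul_one] at h1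
  simp only [heg, sign_mul_self] at h1
  refine le_trans (le_of_eq ?_) (ENNReal.ofReal_le_ofReal ((le_abs_self _).trans h1))
  rw [ENNReal.ofReal_sum_of_nonneg (fun _ _ => abs_nonneg _)]
  simp [edist_dist, Real.dist_eq]


theorem count_var (f : ℝ → ℝ) {ρ : ℝ} (hρ : 0 ≤ ρ) (p : ℝ) (T : Finset ℝ) :
    (∀ τ ∈ T, f τ = ρ) → (∀ τ ∈ T, ∀ τ' ∈ T, τ < τ' → ∃ z ∈ Icc τ τ', f z = 0) →
    ∀ q, (∀ τ ∈ T, τ ∈ Icc p q) →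
    (T.card : ENNReal) * ENNReal.ofReal (2 * ρ) ≤
      eVariationOn f (Icc p q) + ENNReal.ofReal (2 * ρ) := by
  induction T using Finset.induction_on_max with
  | empty => simp
  | insert τ T hmax ih =>
    intro h1 h2 q h3
    have hnot : τ ∉ T := fun h => lt_irrefl _ (hmax τ h)
    rw [Finset.card_insert_of_notMem hnot]
    push_cast
    rw [add_mul, one_mul]
    refine add_le_add_left ?_ _
    rcases T.eq_empty_or_nonempty with rfl | hne
    · simp
    set τ' := T.max' hne
    have hτ' : τ' ∈ T := T.max'_mem hne
    have ih' := ih (fun x hx => h1 x (Finset.mem_insert_of_mem hx))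
      (fun x hx y hy => h2 x (Finset.mem_insert_of_mem hx) y (Finset.mem_insert_of_mem hy)) τ'
      (fun x hx => ⟨(h3 x (Finset.mem_insert_of_mem hx)).1, T.le_max' x hx⟩)
    obtain ⟨z, hz, hz0⟩ := h2 τ' (Finset.mem_insert_of_mem hτ') τ (Finset.mem_insert_self _ _)
      (hmax _ hτ')
    have hp' := h3 τ' (Finset.mem_insert_of_mem hτ')
    have hp := h3 τ (Finset.mem_insert_self _ _)
    have e1 := h1 τ' (Finset.mem_insert_of_mem hτ')
    have e2 := h1 τ (Finset.mem_insert_self _ _)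
    have a1 := eVariationOn.edist_le f (s := Icc τ' z) (x := τ') (y := z) ⟨le_rfl, hz.1⟩ ⟨hz.1, le_rfl⟩
    have a2 := eVariationOn.edist_le f (s := Icc z q) (x := z) (y := τ) ⟨le_rfl, hz.2.trans hp.2⟩
      ⟨hz.2, hp.2⟩
    have b1 := eVariationOn.Icc_add_Icc f (s := univ) hz.1 (hz.2.trans hp.2) (mem_univ z)
    have b2 := eVariationOn.Icc_add_Icc f (s := univ) hp'.1 hp'.2 (mem_univ τ')
    simp only [univ_inter] at b1 b2
    rw [← b2, ← b1]
    refine ih'.trans (add_le_add_right ?_ _)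
    refine le_trans (le_of_eq ?_) (add_le_add a1 a2)
    rw [e1, e2, hz0, edist_dist, edist_dist, ← ENNReal.ofReal_add dist_nonneg dist_nonneg]
    congr 1
    rw [Real.dist_eq, Real.dist_eq]
    simp [abs_of_nonneg hρ]; ring

theorem exists_sep {X : Type*} [MetricSpace X] {K F : Set X} (hK : IsCompact K) (hF : F ⊆ K)
    {ρ : ℝ} (hρ : 0 < ρ) : ∃ s : Finset X, (↑s ⊆ F) ∧
      (∀ x ∈ s, ∀ y ∈ s, x ≠ y → 2 * ρ ≤ dist x y) ∧ ∀ x ∈ F, ∃ y ∈ s, dist x y < 2 * ρ := by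
  classical
  obtain ⟨t, htK, htf, ht⟩ := hK.finite_cover_balls hρ
  let P : Finset X → Prop := fun s => (↑s ⊆ F) ∧ (∀ x ∈ s, ∀ y ∈ s, x ≠ y → 2 * ρ ≤ dist x y)
  have hbd : ∀ s, P s → s.card ≤ htf.toFinset.card := by
    intro s hs
    have : ∀ x ∈ s, ∃ y ∈ htf.toFinset, dist x y < ρ := by
      intro x hx
      have := ht (hF (hs.1 hx))
      simpa using this
    choose! φ hφ1 hφ2 using this
    refine Finset.card_le_card_of_injOn φ hφ1 ?_
    intro x hx y hy hxy
    by_contra hne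
    have h1 := hs.2 x hx y hy hne
    have h2 := hφ2 x hx
    have h3 := hφ2 y hy
    rw [← hxy] at h3
    have := dist_triangle_right x y (φ x)
    linarith
  have hP0 : P ∅ := by simp [P]
  have hex : ∃ k, ∃ s, P s ∧ s.card = k := ⟨0, ∅, hP0, rfl⟩
  obtain ⟨s, hs, hsm⟩ : ∃ s, P s ∧ ∀ s', P s' → s'.card ≤ s.card := by
    let A : Set ℕ := {k | ∃ s, P s ∧ s.card = k}
    have hA : BddAbove A := ⟨htf.toFinset.card, by rintro k ⟨s, hs, rfl⟩; exact hbd s hs⟩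
    obtain ⟨s, hs, hk⟩ := Nat.sSup_mem hex hA
    exact ⟨s, hs, fun s' hs' => hk ▸ le_csSup hA ⟨s', hs', rfl⟩⟩
  refine ⟨s, hs.1, hs.2, fun x hx => ?_⟩
  by_contra! hcon
  have hxs : x ∉ s := fun h => by have := hcon x h; rw [dist_self] at this; linarith
  have := hsm (insert x s) ⟨?_, ?_⟩
  · rw [Finset.card_insert_of_notMem hxs] at this; omega
  · intro y hy
    rcases Finset.mem_insert.1 hy with rfl | h
    · exact hx
    · exact hs.1 h
  · intro y hy z hz hne
    rcases Finset.mem_insert.1 hy with rfl | h <;> rcases Finset.mem_insert.1 hz with rfl | h'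
    · exact absurd rfl hne
    · exact hcon z h'
    · rw [dist_comm]; exact hcon y h
    · exact hs.2 y h z h' hne

open Classical in
theorem piece_var {X : Type*} [MetricSpace X] {γ : ℝ → X} {p q ρ : ℝ} (hρ : 0 < ρ)
    (hγ : ContinuousOn γ (Icc p q)) (s : Finset X)
    (hs : ∀ x ∈ s, ∀ y ∈ s, x ≠ y → 2 * ρ ≤ dist x y) :
    ((s.filter (· ∈ γ '' Icc p q)).card : ENNReal) * ENNReal.ofReal (2 * ρ) ≤
      eVariationOn ((fun x => max (ρ - Metric.infDist x (s : Set X)) 0) ∘ γ) (Icc p q)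
        + ENNReal.ofReal (2 * ρ) := by
  have : ∀ x ∈ s.filter (· ∈ γ '' Icc p q), ∃ τ ∈ Icc p q, γ τ = x := by
    intro x hx
    exact (Finset.mem_filter.1 hx).2
  choose! τ hτ1 hτ2 using this
  have hinj : Set.InjOn τ (s.filter (· ∈ γ '' Icc p q) : Finset X) := by
    intro x hx y hy hxy
    rw [← hτ2 x hx, ← hτ2 y hy, hxy]
  rw [← Finset.card_image_of_injOn hinj]
  apply count_var _ hρ.le
  · intro t ht
    obtain ⟨x, hx, rfl⟩ := Finset.mem_image.1 ht
    have hxs : x ∈ (s : Set X) := (Finset.mem_filter.1 hx).1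
    simp [hτ2 x hx, Metric.infDist_zero_of_mem hxs, hρ.le]
  · intro t ht t' ht' hlt
    obtain ⟨x, hx, rfl⟩ := Finset.mem_image.1 ht
    obtain ⟨y, hy, rfl⟩ := Finset.mem_image.1 ht'
    have hxs := (Finset.mem_filter.1 hx).1
    have hys := (Finset.mem_filter.1 hy).1
    have hxy : x ≠ y := by rintro rfl; exact lt_irrefl _ hlt
    have hd := hs x hxs y hys hxy
    have hcont : ContinuousOn (fun t => dist (γ t) x) (Icc (τ x) (τ y)) :=
      Continuous.comp_continuousOn (g := fun w => dist w x) (by fun_prop)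
        (hγ.mono (Icc_subset_Icc (hτ1 x hx).1 (hτ1 y hy).2))
    have hivt := intermediate_value_Icc hlt.le hcont
    obtain ⟨z, hz, hzρ⟩ := hivt (show ρ ∈ _ by
      rw [hτ2 x hx, hτ2 y hy, dist_self, dist_comm]
      exact ⟨hρ.le, by linarith⟩)
    refine ⟨z, hz, ?_⟩
    have : ρ ≤ Metric.infDist (γ z) (s : Set X) := by
      rw [Metric.le_infDist ⟨x, hxs⟩]
      intro w hw
      simp only at hzρ
      by_cases hwx : w = x
      · rw [hwx, hzρ]
      · have h1 := hs w hw x hxs hwx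
        have h2 := dist_triangle_left w x (γ z)
        linarith
    simp [this]
  · intro t ht
    obtain ⟨x, hx, rfl⟩ := Finset.mem_image.1 ht
    exact hτ1 x hx

theorem sum_liminf_le (n : ℕ) (f : ℕ → ℕ → ENNReal) :
    ∑ j ∈ Finset.range n, liminf (fun m => f m j) atTop ≤
      liminf (fun m => ∑ j ∈ Finset.range n, f m j) atTop := by
  have := lintegral_liminf_le (u := (atTop : Filter ℕ)) (μ := (Measure.count : Measure (Fin n))) (f := fun m (j : Fin n) => f m j)
    (fun m => measurable_of_finite _)
  simpa [lintegral_count, tsum_fintype, Finset.sum_range] using this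

open Measure in
theorem edist_le_hausdorff {X : Type*} [MetricSpace X] [MeasurableSpace X] [BorelSpace X]
    {γ : ℝ → X} {p q : ℝ} (hpq : p ≤ q) (hγ : ContinuousOn γ (Icc p q)) :
    edist (γ q) (γ p) ≤ μH[1] (γ '' Icc p q) := by
  have h1 := (LipschitzWith.dist_left (γ p)).hausdorffMeasure_image_le zero_le_one (γ '' Icc p q)
  rw [hausdorffMeasure_real] at h1
  simp only [ENNReal.coe_one, ENNReal.one_rpow, one_mul] at h1
  refine le_trans ?_ h1
  have hivt := intermediate_value_Icc hpq (f := fun t => dist (γ t) (γ p))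
    (Continuous.comp_continuousOn (g := fun w => dist w (γ p)) (by fun_prop) hγ)
  have := measure_mono (μ := volume) hivt
  rw [Real.volume_Icc, dist_self, sub_zero, ← edist_dist] at this
  rwa [image_image]

open Measure Classical in
theorem var_le {X : Type*} [MetricSpace X] {γ : ℝ → X} {a b : ℝ}
    (hγ : ContinuousOn γ (Icc a b)) (C : ENNReal)
    (hC : ∀ g : X → ℝ, LipschitzWith 1 g → (∀ x, |g x| ≤ 1) →
      eVariationOn (g ∘ γ) (Icc a b) ≤ C) :
    eVariationOn γ (Icc a b) ≤ 2 * C := by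
  borelize X
  refine iSup_le ?_
  rintro ⟨n, u, hu, hm⟩
  simp only
  set S : ℕ → Set X := fun j => γ '' Icc (u j) (u (j+1)) with hS
  have hsub : ∀ j, Icc (u j) (u (j+1)) ⊆ Icc a b := fun j => Icc_subset_Icc (hm j).1 (hm _).2
  have hSc : ∀ j, IsCompact (S j) := fun j => isCompact_Icc.image_of_continuousOn (hγ.mono (hsub j))
  have hSn : ∀ j, (S j).Nonempty := fun j => ⟨_, mem_image_of_mem _ ⟨le_rfl, hu (Nat.le_succ j)⟩⟩
  let F : ℝ → Set X := fun η => {x | ∀ j < n, x ∈ S j ∨ η ≤ Metric.infDist x (S j)}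
  -- the main estimate away from the exceptional set
  have B : ∀ η > 0, ∑ j ∈ Finset.range n, μH[1] (S j ∩ F η) ≤ 2 * C := by
    intro η hη
    let K : Set X := ⋃ j ∈ Finset.range n, S j
    have hK : IsCompact K := (Finset.range n).isCompact_biUnion fun j _ => hSc j
    let ρ : ℕ → ℝ := fun m => min (η / 2) 1 * (1 / ((m : ℝ) + 1))
    have hmin : 0 < min (η / 2) 1 := lt_min (by linarith) one_pos
    have hρ : ∀ m, 0 < ρ m := fun m => mul_pos hmin (by positivity)
    have hρle : ∀ m, ρ m ≤ min (η / 2) 1 := fun m => by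
      refine mul_le_of_le_one_right hmin.le ?_
      rw [div_le_one (by positivity)]
      have : (0:ℝ) ≤ m := by positivity
      linarith
    have hρ0 : Tendsto ρ atTop (𝓝 0) := by
      have := (tendsto_one_div_add_atTop_nhds_zero_nat (𝕜 := ℝ)).const_mul (min (η / 2) 1)
      simpa [ρ] using this
    choose s hs1 hs2 hs3 using fun m => exists_sep hK (inter_subset_left : K ∩ F η ⊆ K) (hρ m)
    let N : ℕ → ℕ → ℕ := fun m j => ((s m).filter (· ∈ S j)).card
    have hcov : ∀ j < n, μH[1] (S j ∩ F η) ≤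
        liminf (fun m => (N m j : ENNReal) * ENNReal.ofReal (4 * ρ m)) atTop := by
      intro j hj
      have hdiam : ∀ m (x : X), Metric.ediam (Metric.closedBall x (2 * ρ m)) ≤ ENNReal.ofReal (4 * ρ m) := by
        intro m x
        rw [← Metric.closedEBall_ofReal (by linarith [hρ m])]
        refine Metric.ediam_closedEBall_le.trans (le_of_eq ?_)
        rw [show (2 : ENNReal) = ENNReal.ofReal 2 by simp, ← ENNReal.ofReal_mul (by norm_num)]
        congr 1; ring
      have := hausdorffMeasure_le_liminf_sum 1 (S j ∩ F η) (l := atTop)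
        (ι := fun m => ((s m).filter (· ∈ S j) : Finset X))
        (fun m => ENNReal.ofReal (4 * ρ m))
        (by
          have := ENNReal.tendsto_ofReal (hρ0.const_mul 4)
          simpa using this)
        (fun m x => Metric.closedBall x.1 (2 * ρ m))
        (Eventually.of_forall fun m x => hdiam m x.1)
        (Eventually.of_forall fun m x hx => by
          obtain ⟨y, hy, hd⟩ := hs3 m x ⟨mem_biUnion (Finset.mem_coe.2 (Finset.mem_range.2 hj)) hx.1, hx.2⟩
          have hyS : y ∈ S j := by
            rcases (hs1 m hy).2 j hj with h | h
            · exact h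
            · have h1 := Metric.infDist_le_dist_of_mem (x := y) hx.1
              rw [dist_comm] at h1
              have := (hρle m).trans (min_le_left _ _)
              linarith
          exact mem_iUnion.2 ⟨⟨y, Finset.mem_filter.2 ⟨hy, hyS⟩⟩, hd.le⟩)
      refine this.trans (liminf_le_liminf (Eventually.of_forall fun m => ?_))
      refine (Finset.sum_le_sum fun x _ => (show _ ≤ ENNReal.ofReal (4 * ρ m) by
        rw [ENNReal.rpow_one]; exact hdiam m x.1)).trans (le_of_eq ?_)
      simp [N]
    have hub : ∀ m, ∑ j ∈ Finset.range n, (N m j : ENNReal) * ENNReal.ofReal (4 * ρ m) ≤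
        2 * (C + n * ENNReal.ofReal (2 * ρ m)) := by
      intro m
      have h4 : ENNReal.ofReal (4 * ρ m) = 2 * ENNReal.ofReal (2 * ρ m) := by
        rw [show (2 : ENNReal) = ENNReal.ofReal 2 by simp, ← ENNReal.ofReal_mul (by norm_num)]
        congr 1; ring
      simp only [h4, mul_left_comm _ (2 : ENNReal)]
      rw [← Finset.mul_sum]
      refine mul_le_mul_right ?_ _
      refine (Finset.sum_le_sum fun j _ => piece_var (hρ m) (hγ.mono (hsub j)) (s m) (hs2 m)).trans ?_
      rw [Finset.sum_add_distrib, eVariationOn.sum' _ hu]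
      refine add_le_add ((eVariationOn.mono _ (Icc_subset_Icc (hm 0).1 (hm n).2)).trans (hC _ ?_ ?_)) ?_
      · have h1 : LipschitzWith 1 (fun x => ρ m - Metric.infDist x (s m : Set X)) := by
          refine LipschitzWith.of_dist_le_mul fun x y => ?_
          have := (Metric.lipschitz_infDist_pt (s m : Set X)).dist_le_mul x y
          rwa [Real.dist_eq, sub_sub_sub_cancel_left, abs_sub_comm, ← Real.dist_eq]
        exact h1.max_const 0
      · intro x
        have h0 : 0 ≤ Metric.infDist x (s m : Set X) := Metric.infDist_nonneg
        have := (hρle m).trans (min_le_right _ _)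
        rw [abs_of_nonneg (le_max_right _ _)]
        exact max_le (by linarith) zero_le_one
      · simp
    refine (Finset.sum_le_sum fun j hj => hcov j (Finset.mem_range.1 hj)).trans ?_
    refine (sum_liminf_le n _).trans ?_
    refine (liminf_le_liminf (Eventually.of_forall hub)).trans (le_of_eq ?_)
    apply Tendsto.liminf_eq
    have h1 := ENNReal.tendsto_ofReal (hρ0.const_mul 2)
    rw [mul_zero, ENNReal.ofReal_zero] at h1
    have h2 := ENNReal.Tendsto.const_mul (a := (n : ENNReal)) h1 (Or.inr (by simp))
    rw [mul_zero] at h2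
    have h3 := ENNReal.Tendsto.const_mul (a := (2 : ENNReal)) (h2.const_add C) (Or.inr (by simp))
    rwa [add_zero] at h3
  -- exhaust
  have D : ∀ j, Tendsto (fun m : ℕ => μH[1] (S j ∩ F (1 / ((m : ℝ) + 1)))) atTop (𝓝 (μH[1] (S j))) := by
    intro j
    have hmono : Monotone (fun m : ℕ => S j ∩ F (1 / ((m : ℝ) + 1))) := by
      intro m m' hmm x hx
      refine ⟨hx.1, fun k hk => (hx.2 k hk).imp id fun h => le_trans ?_ h⟩
      exact one_div_le_one_div_of_le (by positivity) (by exact_mod_cast Nat.succ_le_succ hmm)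
    have hun : ⋃ m : ℕ, S j ∩ F (1 / ((m : ℝ) + 1)) = S j := by
      rw [← inter_iUnion, inter_eq_left]
      intro x _
      have : ∀ k, ∃ m : ℕ, x ∈ S k ∨ 1 / ((m : ℝ) + 1) ≤ Metric.infDist x (S k) := by
        intro k
        by_cases hx : x ∈ S k
        · exact ⟨0, Or.inl hx⟩
        · have := ((hSc k).isClosed.notMem_iff_infDist_pos (hSn k)).1 hx
          obtain ⟨m, hm⟩ := exists_nat_one_div_lt this
          exact ⟨m, Or.inr hm.le⟩
      choose M hM using this
      refine mem_iUnion.2 ⟨(Finset.range n).sup M, fun k hk => (hM k).imp id fun h => le_trans ?_ h⟩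
      have : M k ≤ (Finset.range n).sup M := Finset.le_sup (Finset.mem_range.2 hk)
      exact one_div_le_one_div_of_le (by positivity) (by exact_mod_cast Nat.succ_le_succ this)
    have := tendsto_measure_iUnion_atTop (μ := μH[1]) hmono
    rwa [hun] at this
  have E := le_of_tendsto' (tendsto_finsetSum (Finset.range n) fun j _ => D j)
    fun m => B _ (by positivity)
  refine le_trans (Finset.sum_le_sum fun j _ => ?_) E
  exact edist_le_hausdorff (hu (Nat.le_succ j)) (hγ.mono (hsub j))

end Helpers

/-- A continuous mapping `γ : [a,b] → X` is absolutely continuous if and only if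
for every Lipschitz function `h : X → ℝ` the composition `h ∘ γ` is absolutely
continuous. -/
theorem absolutelyContinuous_iff_comp_lipschitz {X : Type*} [MetricSpace X]
    (a b : ℝ) (γ : ℝ → X) (hγ : ContinuousOn γ (Set.Icc a b)) :
    AbsContOn γ a b ↔
      ∀ h : X → ℝ, (∃ L : ℝ, 0 ≤ L ∧ ∀ x y : X, |h x - h y| ≤ L * dist x y) →
        AbsContOn (h ∘ γ) a b := by
  constructor
  · rintro H h ⟨L, hL, hh⟩ ε hε
    obtain ⟨δ, hδ, H⟩ := H (ε / (L + 1)) (by positivity)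
    refine ⟨δ, hδ, fun n c d h1 h2 h3 => ?_⟩
    have h4 := H n c d h1 h2 h3
    rw [lt_div_iff₀ (by positivity)] at h4
    refine lt_of_le_of_lt ?_ h4
    rw [Finset.sum_mul]
    refine Finset.sum_le_sum fun i _ => ?_
    rw [Real.dist_eq]
    refine (hh _ _).trans ?_
    rw [mul_comm]
    exact mul_le_mul_of_nonneg_left (by linarith) dist_nonneg
  · intro H
    rcases le_or_gt a b with hab | hab
    · have H' : ∀ h : X → ℝ, (∃ L : ℝ, 0 ≤ L ∧ ∀ x y : X, |h x - h y| ≤ L * dist x y) →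
          AbsolutelyContinuousOnInterval (h ∘ γ) a b := fun h hh => (absContOn_iff hab).1 (H h hh)
      rw [absContOn_iff hab]
      refine ac_of_bv hab ?_ fun x => H' (fun y => dist y x) ⟨1, zero_le_one, fun y z => ?_⟩
      · obtain ⟨C, hC⟩ := unif_bound (γ := γ) (a := a) (b := b) fun h hh => by
          have := (H' h hh).boundedVariationOn
          rwa [Set.uIcc_of_le hab] at this
        have := var_le hγ (ENNReal.ofReal C) hC
        exact ne_top_of_le_ne_top (ENNReal.mul_ne_top (by simp) ENNReal.ofReal_ne_top) this
      · rw [one_mul]; exact abs_dist_sub_le y z x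
    · intro ε hε
      refine ⟨1, one_pos, fun n c d h1 _ _ => ?_⟩
      have : IsEmpty (Fin n) := ⟨fun i => by obtain ⟨h2, h3, h4⟩ := h1 i; linarith⟩
      simpa using hε
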